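/- For every integer n ≥ 1, the ℤ-linear span of the numbers d_S, S ⊆ {1,…,n}, equals the subring ℤ[2·cos(π/2^{n+1})] of ℝ generated by 2·cos(π/2^{n+1}). In particular, for every integer r with 1 ≤ r ≤ 2^n − 1, the number 2·cos(rπ/2^{n+1}) is a ℤ-linear combination of the numbers d_S, S ⊆ {1,…,n}. -/

import Mathlib

open Real

/-- `c j = 2·cos(π/2^(j+1))` (so `c 0 = 0`). -/
noncomputable def c (j : ℕ) : ℝ := 2 * Real.cos (π / 2 ^ (j + 1))

/-- `d S = ∏_{j ∈ S} c j` (so `d ∅ = 1`). -/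
noncomputable def d (S : Finset ℕ) : ℝ := ∏ j ∈ S, c j

theorem c_zero : c 0 = 0 := by simp [c]

theorem c_succ_mul_self (j : ℕ) : c (j + 1) * c (j + 1) = 2 + c j := by
  have h : π / 2 ^ (j + 1) = 2 * (π / 2 ^ (j + 1 + 1)) := by
    rw [pow_succ _ (j + 1)]
    field_simp
  simp only [c]
  rw [h, Real.cos_two_mul]
  ring

/-- The span of the `d S` with `S ⊆ {1,…,n}` is stable under multiplication by `c j`, `j ≤ n`. -/
theorem c_mul_d_mem_span {n j : ℕ} (hj : j ≤ n) {S : Finset ℕ} (hS : S ⊆ Finset.Icc 1 n) :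
    c j * d S ∈ Submodule.span ℤ (d '' {S : Finset ℕ | S ⊆ Finset.Icc 1 n}) := by
  induction j generalizing S with
  | zero => simp [c_zero]
  | succ j ih =>
    by_cases hjS : j + 1 ∈ S
    · have hS' : S.erase (j + 1) ⊆ Finset.Icc 1 n := (Finset.erase_subset _ _).trans hS
      have hd : c (j + 1) * d S =
          (2 : ℤ) • d (S.erase (j + 1)) + c j * d (S.erase (j + 1)) := by
        have h : d S = c (j + 1) * d (S.erase (j + 1)) := (Finset.mul_prod_erase S c hjS).symm
        rw [h, ← mul_assoc, c_succ_mul_self, zsmul_eq_mul]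
        push_cast
        ring
      rw [hd]
      exact add_mem (Submodule.smul_mem _ _ (Submodule.subset_span ⟨_, hS', rfl⟩))
        (ih (by omega) hS')
    · refine Submodule.subset_span ⟨insert (j + 1) S, ?_, Finset.prod_insert hjS⟩
      exact Finset.insert_subset (Finset.mem_Icc.mpr ⟨by omega, hj⟩) hS

theorem c_mul_mem_span {n j : ℕ} (hj : j ≤ n) {x : ℝ}
    (hx : x ∈ Submodule.span ℤ (d '' {S : Finset ℕ | S ⊆ Finset.Icc 1 n})) :
    c j * x ∈ Submodule.span ℤ (d '' {S : Finset ℕ | S ⊆ Finset.Icc 1 n}) := by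
  induction hx using Submodule.span_induction with
  | mem x hx =>
    obtain ⟨S, hS, rfl⟩ := hx
    exact c_mul_d_mem_span hj hS
  | zero => simp
  | add x y _ _ hx hy => rw [mul_add]; exact add_mem hx hy
  | smul a x _ hx => rw [mul_smul_comm]; exact Submodule.smul_mem _ _ hx

/-- A submodule that contains `1` and is stable under multiplication by `a` contains `R[a]`. -/
theorem adjoin_singleton_le_of_mul_mem {R A : Type*} [CommRing R] [CommRing A] [Algebra R A]
    {M : Submodule R A} {a : A} (h1 : 1 ∈ M) (ha : ∀ x ∈ M, a * x ∈ M) :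
    Subalgebra.toSubmodule (Algebra.adjoin R {a}) ≤ M := by
  intro y hy
  suffices h : ∀ x ∈ M, y * x ∈ M by simpa using h 1 h1
  induction hy using Algebra.adjoin_induction with
  | mem y hy => rwa [Set.mem_singleton_iff.mp hy]
  | algebraMap r =>
    intro x hx
    rw [← Algebra.smul_def]
    exact M.smul_mem r hx
  | add y z _ _ hy hz =>
    intro x hx
    rw [add_mul]
    exact add_mem (hy x hx) (hz x hx)
  | mul y z _ _ hy hz =>
    intro x hx
    rw [mul_assoc]
    exact hy _ (hz x hx)

theorem c_mem_adjoin {n j : ℕ} (hj : j ≤ n) : c j ∈ Algebra.adjoin ℤ {c n} := by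
  induction hj using Nat.decreasingInduction with
  | self => exact Algebra.self_mem_adjoin_singleton ℤ _
  | of_succ j _ ih =>
    have h : c j = c (j + 1) * c (j + 1) - 2 := by rw [c_succ_mul_self]; ring
    rw [h]
    exact sub_mem (mul_mem ih ih) (ofNat_mem _ 2)

theorem two_mul_cos_nat_mul_mem_adjoin (θ : ℝ) (r : ℕ) :
    2 * Real.cos (r * θ) ∈ Algebra.adjoin ℤ {2 * Real.cos θ} := by
  induction r using Nat.twoStepInduction with
  | zero => simp
  | one => simp
  | more r ih ih' =>
    have h : 2 * Real.cos ((r + 2 : ℕ) * θ) =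
        2 * Real.cos θ * (2 * Real.cos ((r + 1 : ℕ) * θ)) - 2 * Real.cos (r * θ) := by
      have h₁ : ((r + 2 : ℕ) : ℝ) * θ = (r + 1 : ℕ) * θ + θ := by push_cast; ring
      have h₂ : (r : ℝ) * θ = (r + 1 : ℕ) * θ - θ := by push_cast; ring
      rw [h₁, h₂, Real.cos_add, Real.cos_sub]
      ring
    rw [h]
    exact sub_mem (mul_mem (Algebra.self_mem_adjoin_singleton ℤ _) ih') ih

theorem span_d_eq_adjoin (n : ℕ) :
    Submodule.span ℤ (d '' {S : Finset ℕ | S ⊆ Finset.Icc 1 n}) =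
      Subalgebra.toSubmodule (Algebra.adjoin ℤ {c n}) := by
  apply le_antisymm
  · rw [Submodule.span_le]
    rintro _ ⟨S, hS, rfl⟩
    exact Subalgebra.prod_mem _ fun j hj => c_mem_adjoin (Finset.mem_Icc.mp (hS hj)).2
  · exact adjoin_singleton_le_of_mul_mem
      (Submodule.subset_span ⟨∅, Finset.empty_subset _, Finset.prod_empty⟩)
      fun x hx => c_mul_mem_span le_rfl hx

/-- for `n ≥ 1`, the `ℤ`-span of the numbers `d S`, `S ⊆ {1,…,n}`, equals
the subring `ℤ[2·cos(π/2^(n+1))]` of `ℝ`; in particular every `2·cos(rπ/2^(n+1))`,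
`1 ≤ r ≤ 2^n − 1`, is a `ℤ`-linear combination of the `d S`. -/
theorem stmt_2 (n : ℕ) (hn : 1 ≤ n) :
    (Submodule.span ℤ (d '' {S : Finset ℕ | S ⊆ Finset.Icc 1 n}) : Set ℝ) =
      (Algebra.adjoin ℤ {2 * Real.cos (π / 2 ^ (n + 1))} : Subalgebra ℤ ℝ) ∧
    ∀ r : ℕ, 1 ≤ r → r ≤ 2 ^ n - 1 →
      2 * Real.cos (r * π / 2 ^ (n + 1)) ∈
        Submodule.span ℤ (d '' {S : Finset ℕ | S ⊆ Finset.Icc 1 n}) := by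
  rw [span_d_eq_adjoin]
  refine ⟨rfl, fun r _ _ => ?_⟩
  rw [mul_div_assoc]
  exact two_mul_cos_nat_mul_mem_adjoin _ r
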